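/- Let n < p < ∞, γ ≥ 1, and let π be a countable family of cubes in ℝⁿ with finite covering multiplicity M_π. Then there exists a constant C depending only on n, p, γ and M_π such that for every continuously differentiable function F : ℝⁿ → ℝ with ∫_{ℝⁿ} ‖∇F(x)‖^p dx < ∞ one has Σ_{Q∈π} |Q| ( E(F; γQ) / diam Q )^p ≤ C ∫_{ℝⁿ} ‖∇F(x)‖^p dx. (The paper states this for continuous functions in the homogeneous Sobolev space L_p^1(ℝⁿ); here F is taken to be C¹ with p-integrable gradient.) -/

import Mathlib

/-!
Fix an exponent `q` with `n < q < p` and write `g` for the norm of the gradient of `F`.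

Morrey's inequality on a cube `B` (`morrey`) bounds the oscillation of `F` on `B` by a constant
times `diam B` times the `q`-mean `(⨍_B g ^ q) ^ (1 / q)`. It is obtained by integrating `F` along
segments from a fixed point `x ∈ B` to all other points `z ∈ B`: the contraction of `B` by a factor
`t` towards `x` stays in `B`, so Hölder's inequality and a change of variables bound the mean of
`g` over the contracted cube by `t ^ (-n / q)` times the `q`-mean over `B`, and `t ^ (-n / q)` is
integrable on `(0, 1]`.

Applied to `B = γQ`, this reduces the theorem to the estimate
`∑ |Q| (⨍_{γQ} h) ^ s ≤ C ∫ h ^ s` with `h = g ^ q` and `s = p / q > 1` (`strong_type`). This is a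
form of the Hardy-Littlewood maximal theorem, proved without the maximal function: the weak-type
bound `weak_type` for the cubes with `⨍_{γQ} h > t` follows from the bounded multiplicity of the
family and from Vitali's covering lemma for the cubes `γQ`, and integrating it over the levels `t`
gives the claim. Only finite subfamilies are needed, since the sum is the supremum of its finite
partial sums.
-/

open MeasureTheory Metric Set
open scoped ENNReal

/-- A closed cube `Q(c, r)` in `ℝⁿ` (with the uniform norm): center `c`, radius `r`. -/
structure PCube (n : ℕ) where
  c : Fin n → ℝ
  r : ℝ

namespace PCube

variable {n : ℕ}

/-- The underlying set of the cube. -/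
def toSet (Q : PCube n) : Set (Fin n → ℝ) := Metric.closedBall Q.c Q.r

/-- The diameter `2r` of the cube (uniform norm). -/
def diam (Q : PCube n) : ℝ := 2 * Q.r

/-- Dilation `λQ` of the cube about its center. -/
def scale (Q : PCube n) (l : ℝ) : PCube n := ⟨Q.c, l * Q.r⟩

/-- The volume `|Q| = (2r)ⁿ` of the cube. -/
def vol (Q : PCube n) : ℝ := (2 * Q.r) ^ n

end PCube

/-- Distance between two subsets of `ℝⁿ`. -/
noncomputable def setDist {n : ℕ} (A B : Set (Fin n → ℝ)) : ℝ :=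
  sInf (Set.image2 dist A B)

/-- Oscillation `E(f; U)` of `f` on `U`. -/
noncomputable def osc {n : ℕ} (f : (Fin n → ℝ) → ℝ) (U : Set (Fin n → ℝ)) : ℝ :=
  sSup ((fun q : (Fin n → ℝ) × (Fin n → ℝ) => |f q.1 - f q.2|) '' (U ×ˢ U))

/-- `Q` is `α`-porous with respect to `S`. -/
def Porous {n : ℕ} (α : ℝ) (S : Set (Fin n → ℝ)) (Q : PCube n) : Prop :=
  ∃ Q' : PCube n, 0 < Q'.r ∧ Q'.toSet ⊆ Q.toSet \ S ∧ α * Q.diam ≤ Q'.diam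

/-- `‖∇F(x)‖ = max_i |∂F/∂x_i(x)|`. -/
noncomputable def gradNorm {n : ℕ} (F : (Fin n → ℝ) → ℝ) (x : Fin n → ℝ) : ℝ :=
  ‖fun i : Fin n => fderiv ℝ F x (Pi.single i 1)‖

/-- A packing: a finite family of nondegenerate, pairwise disjoint cubes. -/
def IsPacking {n : ℕ} (π : Finset (PCube n)) : Prop :=
  (∀ Q ∈ π, 0 < Q.r) ∧ ∀ Q ∈ π, ∀ Q' ∈ π, Q ≠ Q' → Disjoint Q.toSet Q'.toSet

/-- All cubes in the family have equal diameter. -/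
def EqualDiam {n : ℕ} (π : Finset (PCube n)) : Prop :=
  ∀ Q ∈ π, ∀ Q' ∈ π, Q.r = Q'.r

/-- The functional `A_p(f; t : S)` (via local oscillations). -/
noncomputable def Ap {n : ℕ} (p : ℝ) (f : (Fin n → ℝ) → ℝ) (t : ℝ)
    (S : Set (Fin n → ℝ)) : ℝ≥0∞ :=
  ⨆ π ∈ {π : Finset (PCube n) | IsPacking π ∧ EqualDiam π ∧ (∀ Q ∈ π, Q.c ∈ S) ∧
      ∀ Q ∈ π, Q.diam ≤ t},
    ENNReal.ofReal ((∑ Q ∈ π, Q.vol * osc f (Q.toSet ∩ S) ^ p) ^ (1 / p))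

/-- `𝔸_{p,α}(f; t : S)`: as `A_p` but over `α`-porous packings. -/
noncomputable def ApPorous {n : ℕ} (p α : ℝ) (f : (Fin n → ℝ) → ℝ) (t : ℝ)
    (S : Set (Fin n → ℝ)) : ℝ≥0∞ :=
  ⨆ π ∈ {π : Finset (PCube n) | IsPacking π ∧ EqualDiam π ∧ (∀ Q ∈ π, Q.c ∈ S) ∧
      (∀ Q ∈ π, Q.diam ≤ t) ∧ ∀ Q ∈ π, Porous α S Q},
    ENNReal.ofReal ((∑ Q ∈ π, Q.vol * osc f (Q.toSet ∩ S) ^ p) ^ (1 / p))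

/-- `E(f; Q)_{L_p(μ)}`. -/
noncomputable def oscLp {n : ℕ} (μ : Measure (Fin n → ℝ)) (p : ℝ) (f : (Fin n → ℝ) → ℝ)
    (Q : PCube n) : ℝ≥0∞ :=
  ((μ Q.toSet)⁻¹ ^ 2 *
    ∫⁻ x in Q.toSet, ∫⁻ y in Q.toSet, ENNReal.ofReal (|f x - f y| ^ p) ∂μ ∂μ) ^ (1 / p)

/-- `A_p(f; t : S)_{L_p(μ)}`. -/
noncomputable def ApLp {n : ℕ} (μ : Measure (Fin n → ℝ)) (p : ℝ) (f : (Fin n → ℝ) → ℝ)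
    (t : ℝ) (S : Set (Fin n → ℝ)) : ℝ≥0∞ :=
  ⨆ π ∈ {π : Finset (PCube n) | IsPacking π ∧ EqualDiam π ∧ (∀ Q ∈ π, Q.c ∈ S) ∧
      ∀ Q ∈ π, Q.diam ≤ t},
    (∑ Q ∈ π, ENNReal.ofReal Q.vol * oscLp μ p f Q ^ p) ^ (1 / p)

/-- `𝒜_{p,α}(f; t : S)_{L_p(μ)}`: over `α`-porous packings centered at the boundary of `S`. -/
noncomputable def AcalLp {n : ℕ} (μ : Measure (Fin n → ℝ)) (p α : ℝ) (f : (Fin n → ℝ) → ℝ)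
    (t : ℝ) (S : Set (Fin n → ℝ)) : ℝ≥0∞ :=
  ⨆ π ∈ {π : Finset (PCube n) | IsPacking π ∧ EqualDiam π ∧ (∀ Q ∈ π, Q.c ∈ frontier S) ∧
      (∀ Q ∈ π, Q.diam ≤ t) ∧ ∀ Q ∈ π, Porous α S Q},
    (∑ Q ∈ π, ENNReal.ofReal Q.vol * oscLp μ p f Q ^ p) ^ (1 / p)

/-- `ρ_{α,S}(x,y) ∈ [0,∞]`. -/
noncomputable def rho {n : ℕ} (α : ℝ) (S : Set (Fin n → ℝ)) (x y : Fin n → ℝ) : ℝ≥0∞ :=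
  sInf {d : ℝ≥0∞ | ∃ Q : PCube n, 0 < Q.r ∧ x ∈ Q.toSet ∧ y ∈ Q.toSet ∧
    (Q.scale α).toSet ⊆ Sᶜ ∧ d = ENNReal.ofReal Q.diam}

/-- The sharp maximal function `f^♯_{∞,S}`. -/
noncomputable def sharpMax {n : ℕ} (S : Set (Fin n → ℝ)) (f : (Fin n → ℝ) → ℝ)
    (x : Fin n → ℝ) : ℝ :=
  sSup {v : ℝ | ∃ r : ℝ, 0 < r ∧ ∃ y ∈ Metric.closedBall x r ∩ S,
    ∃ z ∈ Metric.closedBall x r ∩ S, v = |f y - f z| / r}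

/-- `supp μ = S`. -/
def IsSuppOn {n : ℕ} (μ : Measure (Fin n → ℝ)) (S : Set (Fin n → ℝ)) : Prop :=
  μ Sᶜ = 0 ∧ ∀ x ∈ S, ∀ r : ℝ, 0 < r → 0 < μ (Metric.closedBall x r)

/-- The doubling condition (1.12). -/
def Doubling {n : ℕ} (μ : Measure (Fin n → ℝ)) (S : Set (Fin n → ℝ)) (cμ : ℝ) : Prop :=
  ∀ x ∈ S, ∀ r : ℝ, 0 < r → r ≤ 1 / 2 →
    μ (Metric.closedBall x (2 * r)) ≤ ENNReal.ofReal cμ * μ (Metric.closedBall x r)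

/-- Condition `(D_n)` (1.11). -/
def CondDn {n : ℕ} (μ : Measure (Fin n → ℝ)) (S : Set (Fin n → ℝ)) (Cμ : ℝ) : Prop :=
  ∀ x ∈ S, ∀ r : ℝ, 0 < r → r ≤ 1 → ∀ k : ℝ, 1 ≤ k → k ≤ 1 / r →
    μ (Metric.closedBall x (k * r)) ≤ ENNReal.ofReal (Cμ * k ^ n) * μ (Metric.closedBall x r)

/-- The normalization condition (1.13). -/
def Normalized {n : ℕ} (μ : Measure (Fin n → ℝ)) (S : Set (Fin n → ℝ)) (C' C'' : ℝ) : Prop :=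
  ∀ x ∈ S, ENNReal.ofReal C' ≤ μ (Metric.closedBall x 1) ∧
    μ (Metric.closedBall x 1) ≤ ENNReal.ofReal C''

/-- The double integral over `{‖x−y‖ < t}` (before taking the `1/p` power). -/
noncomputable def I1 {n : ℕ} (μ : Measure (Fin n → ℝ)) (p : ℝ) (S : Set (Fin n → ℝ))
    (f : (Fin n → ℝ) → ℝ) (t : ℝ) : ℝ≥0∞ :=
  ∫⁻ x in S, ∫⁻ y in S,
    ({y : Fin n → ℝ | dist x y < t}.indicator
      (fun y => ENNReal.ofReal (|f x - f y| ^ p) * ENNReal.ofReal (t ^ ((n : ℝ) - p)) *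
        ((μ (Metric.closedBall x t))⁻¹) ^ 2)) y ∂μ ∂μ

/-- The double integral over `{ρ_{α,S}(x,y) < δ}` (before taking the `1/p` power). -/
noncomputable def I2 {n : ℕ} (μ : Measure (Fin n → ℝ)) (p α : ℝ) (S : Set (Fin n → ℝ))
    (f : (Fin n → ℝ) → ℝ) (δ : ℝ) : ℝ≥0∞ :=
  ∫⁻ x in S, ∫⁻ y in S,
    ({y : Fin n → ℝ | rho α S x y < ENNReal.ofReal δ}.indicator
      (fun y => ENNReal.ofReal (|f x - f y| ^ p) * rho α S x y ^ ((n : ℝ) - p) *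
        ((μ (Metric.closedBall x (rho α S x y).toReal))⁻¹) ^ 2)) y ∂μ ∂μ

/-! ### Averages over dilated cubes -/

theorem volume_dilate {n : ℕ} (c : Fin n → ℝ) {l r : ℝ} (hl : 0 ≤ l) (hr : 0 ≤ r) :
    volume (closedBall c (l * r)) = ENNReal.ofReal (l ^ n) * volume (closedBall c r) := by
  rw [Real.volume_pi_closedBall _ (by positivity), Real.volume_pi_closedBall _ hr,
    ← ENNReal.ofReal_mul (by positivity), Fintype.card_fin, ← mul_pow]
  congr 2; ring

theorem volume_ball_ne_top {n : ℕ} (c : Fin n → ℝ) (r : ℝ) : volume (closedBall c r) ≠ ∞ :=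
  (isCompact_closedBall c r).measure_lt_top.ne

theorem volume_ball_ne_zero {n : ℕ} (c : Fin n → ℝ) {r : ℝ} (hr : 0 < r) :
    volume (closedBall c r) ≠ 0 :=
  (Metric.measure_closedBall_pos volume c hr).ne'

/-- A family of cubes of multiplicity at most `M` has total volume at most `M` times the volume
of its union. -/
theorem sum_volume_le {n : ℕ} (T : Finset (PCube n)) (M : ℕ)
    (hM : ∀ x, {Q ∈ (T : Set (PCube n)) | x ∈ Q.toSet}.ncard ≤ M) :
    ∑ Q ∈ T, volume Q.toSet ≤ M * volume (⋃ Q ∈ T, Q.toSet) := by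
  classical
  have hm : ∀ Q : PCube n, MeasurableSet Q.toSet := fun Q => measurableSet_closedBall
  have hU : MeasurableSet (⋃ Q ∈ T, Q.toSet) := T.measurableSet_biUnion fun Q _ => hm Q
  have h1 : ∑ Q ∈ T, volume Q.toSet
      = ∫⁻ x, ∑ Q ∈ T, Q.toSet.indicator (fun _ => (1 : ℝ≥0∞)) x := by
    rw [lintegral_finsetSum _ fun Q _ => measurable_const.indicator (hm Q)]
    exact Finset.sum_congr rfl fun Q _ => by rw [lintegral_indicator (hm Q)]; simp
  rw [h1]
  calc _ ≤ ∫⁻ x, (⋃ Q ∈ T, Q.toSet).indicator (fun _ => (M : ℝ≥0∞)) x := by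
        refine lintegral_mono fun x => ?_
        by_cases hx : x ∈ ⋃ Q ∈ T, Q.toSet
        · rw [indicator_of_mem hx]
          have : ∑ Q ∈ T, Q.toSet.indicator (fun _ => (1 : ℝ≥0∞)) x
              = ((T.filter fun Q => x ∈ Q.toSet).card : ℝ≥0∞) := by
            simp [Set.indicator_apply]
          rw [this, ← Set.ncard_coe_finset]
          have := hM x
          simpa using this
        · rw [indicator_of_notMem hx]
          refine le_of_eq (Finset.sum_eq_zero fun Q hQ => indicator_of_notMem (fun h => hx ?_) _)
          exact mem_biUnion hQ h
    _ = _ := by rw [lintegral_indicator hU]; simp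

/-- Weak-type estimate: if the mean of `h` over each dilated cube `γQ` is at least `t`, then the
cubes have total volume `O(t⁻¹) ∫_{2h > t} h`. Vitali's lemma applies directly to the finite family of dilated
cubes, and the part of `h` below `t / 2` contributes at most half of each mean. -/
theorem weak_type {n : ℕ} (γ : ℝ) (hγ : 1 ≤ γ) (M : ℕ) (T : Finset (PCube n))
    (hr : ∀ Q ∈ T, 0 < Q.r)
    (hM : ∀ x, {Q ∈ (T : Set (PCube n)) | x ∈ Q.toSet}.ncard ≤ M)
    (h : (Fin n → ℝ) → ℝ≥0∞) (hh : Measurable h) (t : ℝ)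
    (hT : ∀ Q ∈ T, ENNReal.ofReal t * volume (closedBall Q.c (γ * Q.r))
      ≤ ∫⁻ x in closedBall Q.c (γ * Q.r), h x) :
    ENNReal.ofReal t * ∑ Q ∈ T, volume Q.toSet ≤
      (M * ENNReal.ofReal (5 ^ n) * 2) *
        ∫⁻ x, if ENNReal.ofReal t < 2 * h x then h x else 0 := by
  classical
  have hγ0 : 0 < γ := by linarith
  set g : (Fin n → ℝ) → ℝ≥0∞ := fun x => if ENNReal.ofReal t < 2 * h x then h x else 0 with hg
  have hgm : Measurable g :=
    Measurable.ite (measurableSet_lt measurable_const (hh.const_mul 2)) hh measurable_const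
  -- The truncation of `h` still has mean at least `t / 2`.
  have key : ∀ Q ∈ T, ENNReal.ofReal t * volume (closedBall Q.c (γ * Q.r))
      ≤ 2 * ∫⁻ x in closedBall Q.c (γ * Q.r), g x := by
    intro Q hQ
    set B := closedBall Q.c (γ * Q.r)
    have hle : ∀ x, 2 * h x ≤ ENNReal.ofReal t + 2 * g x := by
      intro x
      by_cases hx : ENNReal.ofReal t < 2 * h x
      · simp only [hg, if_pos hx]; exact le_add_self
      · simp only [hg, if_neg hx]; simpa using not_lt.1 hx
    have h2 : 2 * (ENNReal.ofReal t * volume B)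
        ≤ ENNReal.ofReal t * volume B + 2 * ∫⁻ x in B, g x := by
      calc 2 * (ENNReal.ofReal t * volume B) ≤ 2 * ∫⁻ x in B, h x := by gcongr; exact hT Q hQ
        _ = ∫⁻ x in B, 2 * h x := by rw [lintegral_const_mul _ hh]
        _ ≤ ∫⁻ x in B, (ENNReal.ofReal t + 2 * g x) := lintegral_mono hle
        _ = _ := by
          rw [lintegral_add_left measurable_const, lintegral_const_mul _ hgm]; simp
    rw [two_mul] at h2
    exact (ENNReal.add_le_add_iff_left
      (ENNReal.mul_ne_top ENNReal.ofReal_ne_top (volume_ball_ne_top _ _))).1 h2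
  obtain ⟨R, hR⟩ : ∃ R, ∀ Q ∈ (T : Set (PCube n)), γ * Q.r ≤ R :=
    (T.finite_toSet.image fun Q => γ * Q.r).bddAbove.imp fun R hR Q hQ =>
      hR (mem_image_of_mem _ hQ)
  obtain ⟨u, huT, hud, huc⟩ := Vitali.exists_disjoint_subfamily_covering_enlargement_closedBall
    (T : Set (PCube n)) (fun Q => Q.c) (fun Q => γ * Q.r) R hR 5 (by norm_num)
  obtain ⟨U, rfl⟩ : ∃ U : Finset (PCube n), (U : Set (PCube n)) = u :=
    (T.finite_toSet.subset huT).exists_finset_coe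
  have hcov : (⋃ Q ∈ T, Q.toSet) ⊆ ⋃ Q ∈ U, closedBall Q.c (5 * (γ * Q.r)) := by
    intro x hx
    simp only [mem_iUnion] at hx ⊢
    obtain ⟨Q, hQ, hxQ⟩ := hx
    obtain ⟨b, hb, hsub⟩ := huc Q hQ
    refine ⟨b, hb, hsub (closedBall_subset_closedBall ?_ hxQ)⟩
    nlinarith [hr Q hQ]
  have hvol : volume (⋃ Q ∈ T, Q.toSet)
      ≤ ENNReal.ofReal (5 ^ n) * ∑ Q ∈ U, volume (closedBall Q.c (γ * Q.r)) := by
    refine (measure_mono hcov).trans ((measure_biUnion_finset_le _ _).trans ?_)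
    rw [Finset.mul_sum]
    refine Finset.sum_le_sum fun Q hQ => (volume_dilate _ (by norm_num) ?_).le
    have := hr Q (huT hQ); positivity
  calc ENNReal.ofReal t * ∑ Q ∈ T, volume Q.toSet
      ≤ ENNReal.ofReal t * (M * (ENNReal.ofReal (5 ^ n) *
          ∑ Q ∈ U, volume (closedBall Q.c (γ * Q.r)))) := by
        gcongr
        exact (sum_volume_le T M hM).trans (by gcongr)
    _ = M * ENNReal.ofReal (5 ^ n) *
          ∑ Q ∈ U, ENNReal.ofReal t * volume (closedBall Q.c (γ * Q.r)) := by
        rw [← Finset.mul_sum]; ring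
    _ ≤ M * ENNReal.ofReal (5 ^ n) *
          ∑ Q ∈ U, 2 * ∫⁻ x in closedBall Q.c (γ * Q.r), g x := by
        exact mul_le_mul_right (Finset.sum_le_sum fun Q hQ => key Q (huT hQ)) _
    _ = M * ENNReal.ofReal (5 ^ n) * 2 *
          ∫⁻ x in ⋃ Q ∈ U, closedBall Q.c (γ * Q.r), g x := by
        rw [lintegral_biUnion_finset hud (fun _ _ => measurableSet_closedBall), ← Finset.mul_sum]
        ring
    _ ≤ _ := mul_le_mul_right (setLIntegral_le_lintegral _ _) _

theorem lintegral_rpow_Ioc (a : ℝ) (ha : 0 ≤ a) (b : ℝ) (hb : 0 < b) :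
    ∫⁻ t in Ioc (0 : ℝ) a, ENNReal.ofReal (b * t ^ (b - 1)) = ENNReal.ofReal (a ^ b) := by
  have hint := intervalIntegral.intervalIntegrable_rpow' (a := 0) (b := a) (r := b - 1)
    (by linarith)
  have hintOn : IntegrableOn (fun t : ℝ => b * t ^ (b - 1)) (Ioc 0 a) :=
    ((intervalIntegrable_iff_integrableOn_Ioc_of_le ha).1 hint).const_mul b
  have hnn : 0 ≤ᵐ[volume.restrict (Ioc 0 a)] fun t : ℝ => b * t ^ (b - 1) := by
    refine (ae_restrict_iff' measurableSet_Ioc).2 (ae_of_all _ fun t ht => ?_)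
    have := ht.1
    simp only [Pi.zero_apply]
    positivity
  rw [← ofReal_integral_eq_lintegral_ofReal hintOn hnn,
    ← intervalIntegral.integral_of_le ha, intervalIntegral.integral_const_mul,
    integral_rpow (Or.inl (by linarith)), sub_add_cancel, Real.zero_rpow hb.ne', sub_zero,
    mul_div_cancel₀ _ hb.ne']

/-- Layer-cake formula for the single number `a`. -/
theorem layer_cake (a : ℝ≥0∞) (ha : a ≠ ∞) (b : ℝ) (hb : 0 < b) :
    ∫⁻ t in Ioi (0 : ℝ), (if ENNReal.ofReal t < a then ENNReal.ofReal (b * t ^ (b - 1)) else 0)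
      = a ^ b := by
  lift a to NNReal using ha
  have h1 : ∀ t ∈ Ioi (0 : ℝ),
      (if ENNReal.ofReal t < (a : ℝ≥0∞) then ENNReal.ofReal (b * t ^ (b - 1)) else 0)
      = (Iio (a : ℝ)).indicator (fun t => ENNReal.ofReal (b * t ^ (b - 1))) t := by
    intro t ht
    rw [indicator_apply]
    congr 1
    rw [← ENNReal.ofReal_coe_nnreal, mem_Iio,
      ENNReal.ofReal_lt_ofReal_iff_of_nonneg (le_of_lt ht)]
  rw [setLIntegral_congr_fun measurableSet_Ioi h1, lintegral_indicator measurableSet_Iio,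
    Measure.restrict_restrict measurableSet_Iio, inter_comm, Ioi_inter_Iio,
    setLIntegral_congr (Ioo_ae_eq_Ioc (μ := volume)), lintegral_rpow_Ioc (a : ℝ) a.coe_nonneg b hb,
    ← ENNReal.ofReal_rpow_of_nonneg a.coe_nonneg hb.le, ENNReal.ofReal_coe_nnreal]

/-- Strong-type estimate for the means over dilated cubes, by integrating the weak-type estimate
over all levels. -/
theorem strong_type {n : ℕ} (γ : ℝ) (hγ : 1 ≤ γ) (M : ℕ) (s : ℝ) (hs : 1 < s)
    (T : Finset (PCube n)) (hr : ∀ Q ∈ T, 0 < Q.r)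
    (hM : ∀ x, {Q ∈ (T : Set (PCube n)) | x ∈ Q.toSet}.ncard ≤ M)
    (h : (Fin n → ℝ) → ℝ≥0∞) (hh : Measurable h) (hfin : ∀ x, h x ≠ ∞)
    (hloc : ∀ c r, ∫⁻ x in closedBall c r, h x ≠ ∞) :
    ∑ Q ∈ T, volume Q.toSet * ((∫⁻ x in closedBall Q.c (γ * Q.r), h x) /
        volume (closedBall Q.c (γ * Q.r))) ^ s ≤
      (M * ENNReal.ofReal (5 ^ n) * 2 * ENNReal.ofReal (s / (s - 1)) * 2 ^ (s - 1)) *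
        ∫⁻ x, h x ^ s := by
  classical
  have hγ0 : 0 < γ := by linarith
  have hs1 : 0 < s - 1 := by linarith
  set a : PCube n → ℝ≥0∞ := fun Q => (∫⁻ x in closedBall Q.c (γ * Q.r), h x) /
        volume (closedBall Q.c (γ * Q.r)) with ha
  have hv0 : ∀ Q ∈ T, volume (closedBall Q.c (γ * Q.r)) ≠ 0 := fun Q hQ =>
    volume_ball_ne_zero _ (mul_pos hγ0 (hr Q hQ))
  have hafin : ∀ Q ∈ T, a Q ≠ ∞ := fun Q hQ => ENNReal.div_ne_top (hloc _ _) (hv0 Q hQ)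
  have hmeas : ∀ (b : ℝ) (x : ℝ≥0∞), Measurable fun t : ℝ =>
      (if ENNReal.ofReal t < x then ENNReal.ofReal (b * t ^ (b - 1)) else 0) := fun b x =>
    Measurable.ite (measurableSet_lt ENNReal.measurable_ofReal measurable_const)
      (by fun_prop) measurable_const
  set K : ℝ≥0∞ := M * ENNReal.ofReal (5 ^ n) * 2 with hK
  calc ∑ Q ∈ T, volume Q.toSet * a Q ^ s
      = ∑ Q ∈ T, ∫⁻ t in Ioi (0 : ℝ), volume Q.toSet *
          (if ENNReal.ofReal t < a Q then ENNReal.ofReal (s * t ^ (s - 1)) else 0) := by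
        refine Finset.sum_congr rfl fun Q hQ => ?_
        rw [lintegral_const_mul _ (hmeas s _), layer_cake _ (hafin Q hQ) s (by linarith)]
    _ = ∫⁻ t in Ioi (0 : ℝ), ∑ Q ∈ T, volume Q.toSet *
          (if ENNReal.ofReal t < a Q then ENNReal.ofReal (s * t ^ (s - 1)) else 0) := by
        rw [lintegral_finsetSum _ fun Q _ => (hmeas s _).const_mul _]
    _ ≤ ∫⁻ t in Ioi (0 : ℝ), K * ENNReal.ofReal (s / (s - 1)) *
          ∫⁻ x, h x * (if ENNReal.ofReal t < 2 * h x then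
            ENNReal.ofReal ((s - 1) * t ^ (s - 1 - 1)) else 0) := by
        refine setLIntegral_mono' measurableSet_Ioi fun t ht => ?_
        have ht : 0 < t := ht
        have hw := weak_type γ hγ M (T.filter fun Q => ENNReal.ofReal t < a Q)
          (fun Q hQ => hr Q (Finset.mem_filter.1 hQ).1)
          (fun x => (Set.ncard_le_ncard (inter_subset_inter_left _
            (Finset.coe_subset.2 (Finset.filter_subset _ _)))
            (T.finite_toSet.subset (sep_subset _ _))).trans (hM x))
          h hh t (fun Q hQ => by
            have h1 := (Finset.mem_filter.1 hQ)
            exact (ENNReal.le_div_iff_mul_le (Or.inl (hv0 Q h1.1))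
              (Or.inl (volume_ball_ne_top _ _))).1 h1.2.le)
        -- `s t^(s-1) = (s / (s-1)) ((s-1) t^(s-2)) t`
        have e1 : ENNReal.ofReal (s * t ^ (s - 1)) = ENNReal.ofReal (s / (s - 1)) *
            ENNReal.ofReal ((s - 1) * t ^ (s - 1 - 1)) * ENNReal.ofReal t := by
          rw [← ENNReal.ofReal_mul (by positivity), ← ENNReal.ofReal_mul (by positivity)]
          congr 1
          rw [Real.rpow_sub_one ht.ne' (s - 1)]
          field_simp
        have e2 : ∑ Q ∈ T, volume Q.toSet *
            (if ENNReal.ofReal t < a Q then ENNReal.ofReal (s * t ^ (s - 1)) else 0)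
            = ENNReal.ofReal (s * t ^ (s - 1)) *
              ∑ Q ∈ T.filter (fun Q => ENNReal.ofReal t < a Q), volume Q.toSet := by
          rw [Finset.sum_filter, Finset.mul_sum]
          refine Finset.sum_congr rfl fun Q _ => ?_
          split_ifs <;> ring
        rw [e2, e1]
        calc _ = ENNReal.ofReal (s / (s - 1)) * ENNReal.ofReal ((s - 1) * t ^ (s - 1 - 1)) *
              (ENNReal.ofReal t *
                ∑ Q ∈ T.filter (fun Q => ENNReal.ofReal t < a Q), volume Q.toSet) := by ring
          _ ≤ ENNReal.ofReal (s / (s - 1)) * ENNReal.ofReal ((s - 1) * t ^ (s - 1 - 1)) *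
              (K * ∫⁻ x, if ENNReal.ofReal t < 2 * h x then h x else 0) := by gcongr
          _ = K * ENNReal.ofReal (s / (s - 1)) * ∫⁻ x,
              ENNReal.ofReal ((s - 1) * t ^ (s - 1 - 1)) *
                (if ENNReal.ofReal t < 2 * h x then h x else 0) := by
              rw [lintegral_const_mul _ (Measurable.ite
                (measurableSet_lt measurable_const (hh.const_mul 2)) hh measurable_const)]
              ring
          _ = _ := by
              congr 2 with x
              split_ifs <;> ring
    _ = K * ENNReal.ofReal (s / (s - 1)) * ∫⁻ x, ∫⁻ t in Ioi (0 : ℝ),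
          h x * (if ENNReal.ofReal t < 2 * h x then
            ENNReal.ofReal ((s - 1) * t ^ (s - 1 - 1)) else 0) := by
        have hm2 : Measurable (Function.uncurry fun (t : ℝ) (x : Fin n → ℝ) =>
            h x * (if ENNReal.ofReal t < 2 * h x then
            ENNReal.ofReal ((s - 1) * t ^ (s - 1 - 1)) else 0)) := by
          refine (hh.comp measurable_snd).mul (Measurable.ite (measurableSet_lt
            (ENNReal.measurable_ofReal.comp measurable_fst)
            ((hh.comp measurable_snd).const_mul 2)) (by fun_prop) measurable_const)
        rw [lintegral_const_mul _ hm2.lintegral_prod_right, lintegral_lintegral_swap hm2.aemeasurable]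
    _ = K * ENNReal.ofReal (s / (s - 1)) * ∫⁻ x, 2 ^ (s - 1) * h x ^ s := by
        congr 2 with x
        rw [lintegral_const_mul _ (hmeas (s - 1) _),
          layer_cake _ (ENNReal.mul_ne_top (by simp) (hfin x)) _ hs1,
          ENNReal.mul_rpow_of_nonneg _ _ hs1.le, mul_left_comm]
        congr 1
        conv_rhs => rw [← add_sub_cancel 1 s]
        rw [ENNReal.rpow_add_of_nonneg _ _ zero_le_one hs1.le, ENNReal.rpow_one]
    _ = _ := by rw [lintegral_const_mul _ (hh.pow_const s)]; ring

/-! ### Morrey's inequality on cubes -/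

theorem gradNorm_continuous {n : ℕ} {F : (Fin n → ℝ) → ℝ} (hF : ContDiff ℝ 1 F) :
    Continuous (gradNorm F) :=
  (continuous_pi fun i => (hF.continuous_fderiv (by norm_num)).clm_apply continuous_const).norm

theorem gradNorm_nonneg {n : ℕ} (F : (Fin n → ℝ) → ℝ) (x : Fin n → ℝ) : 0 ≤ gradNorm F x :=
  norm_nonneg _

theorem lintegral_gradNorm_rpow_ne_top {n : ℕ} {F : (Fin n → ℝ) → ℝ} (hF : ContDiff ℝ 1 F)
    {q : ℝ} (hq : 0 ≤ q) (c : Fin n → ℝ) (r : ℝ) :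
    ∫⁻ z in closedBall c r, ENNReal.ofReal (gradNorm F z) ^ q ≠ ∞ := by
  simp_rw [ENNReal.ofReal_rpow_of_nonneg (gradNorm_nonneg F _) hq]
  have hc : Continuous fun z => gradNorm F z ^ q :=
    (gradNorm_continuous hF).rpow_const fun _ => Or.inr hq
  exact (hc.continuousOn.integrableOn_compact (isCompact_closedBall c r)).lintegral_lt_top.ne

/-- The sum over coordinates costs a factor `n`: the operator norm dual to the uniform norm is the
`ℓ¹` norm of the partial derivatives, while `gradNorm` is their maximum. -/
theorem abs_fderiv_le {n : ℕ} (F : (Fin n → ℝ) → ℝ) (x v : Fin n → ℝ) :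
    |fderiv ℝ F x v| ≤ n * ‖v‖ * gradNorm F x := by
  have hv : fderiv ℝ F x v = ∑ i, v i * fderiv ℝ F x (Pi.single i 1) := by
    conv_lhs => rw [← Finset.univ_sum_single v, map_sum]
    refine Finset.sum_congr rfl fun i _ => ?_
    rw [← smul_eq_mul, ← map_smul, ← Pi.single_smul, smul_eq_mul, mul_one]
  rw [hv]
  refine (Finset.abs_sum_le_sum_abs _ _).trans ?_
  calc ∑ i, |v i * fderiv ℝ F x (Pi.single i 1)| ≤ ∑ _i : Fin n, ‖v‖ * gradNorm F x := by
        refine Finset.sum_le_sum fun i _ => ?_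
        rw [abs_mul]
        exact mul_le_mul (norm_le_pi_norm v i)
          (norm_le_pi_norm (fun i : Fin n => fderiv ℝ F x (Pi.single i 1)) i)
          (abs_nonneg _) (norm_nonneg _)
    _ = _ := by simp; ring

/-- Fundamental theorem of calculus along the segment from `x` to `z`. -/
theorem segment_bound {n : ℕ} {F : (Fin n → ℝ) → ℝ} (hF : ContDiff ℝ 1 F) (x z : Fin n → ℝ) :
    ENNReal.ofReal |F x - F z| ≤ n * ENNReal.ofReal ‖z - x‖ *
      ∫⁻ t in Ioc (0 : ℝ) 1, ENNReal.ofReal (gradNorm F (x + t • (z - x))) := by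
  have hd : ∀ t : ℝ, HasDerivAt (fun t : ℝ => F (x + t • (z - x)))
      (fderiv ℝ F (x + t • (z - x)) (z - x)) t := by
    intro t
    have h1 : HasDerivAt (fun t : ℝ => x + t • (z - x)) (z - x) t := by
      simpa using ((hasDerivAt_id t).smul_const (z - x)).const_add x
    exact ((hF.differentiable (by norm_num) _).hasFDerivAt).comp_hasDerivAt t h1
  have hc : Continuous fun t : ℝ => fderiv ℝ F (x + t • (z - x)) (z - x) :=
    ((hF.continuous_fderiv (by norm_num)).comp (by fun_prop)).clm_apply continuous_const
  have hi := intervalIntegral.integral_eq_sub_of_hasDerivAt (a := 0) (b := 1)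
    (fun t _ => hd t) (hc.intervalIntegrable _ _)
  simp only [one_smul, zero_smul, add_zero, add_sub_cancel] at hi
  rw [abs_sub_comm, ← hi, intervalIntegral.integral_of_le zero_le_one, ← Real.norm_eq_abs,
    ofReal_norm]
  refine (enorm_integral_le_lintegral_enorm _).trans ?_
  rw [← lintegral_const_mul _ (by have := gradNorm_continuous hF; fun_prop)]
  refine lintegral_mono fun t => ?_
  rw [← ofReal_norm, Real.norm_eq_abs]
  refine (ENNReal.ofReal_le_ofReal (abs_fderiv_le F _ _)).trans (le_of_eq ?_)
  rw [ENNReal.ofReal_mul (by positivity), ENNReal.ofReal_mul (by positivity),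
    ENNReal.ofReal_natCast]

/-- Change of variables under the contraction of a cube towards one of its points. -/
theorem lintegral_contract {n : ℕ} (c : Fin n → ℝ) (R : ℝ) (x : Fin n → ℝ)
    (hx : x ∈ closedBall c R) (t : ℝ) (ht : 0 < t) (ht1 : t ≤ 1) (H : (Fin n → ℝ) → ℝ≥0∞) :
    ENNReal.ofReal (t ^ n) * ∫⁻ z in closedBall c R, H (x + t • (z - x))
      ≤ ∫⁻ z in closedBall c R, H z := by
  have hsub : (fun z => x + t • (z - x)) '' closedBall c R ⊆ closedBall c R := by
    rintro _ ⟨z, hz, rfl⟩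
    exact (convex_closedBall c R).add_smul_sub_mem hx hz ⟨ht.le, ht1⟩
  have hderiv : ∀ z ∈ closedBall c R, HasFDerivWithinAt (fun z => x + t • (z - x))
      (t • ContinuousLinearMap.id ℝ (Fin n → ℝ)) (closedBall c R) z := fun z _ =>
    ((((hasFDerivAt_id z).sub_const x).const_smul t).const_add x).hasFDerivWithinAt
  have hinj : InjOn (fun z : Fin n → ℝ => x + t • (z - x)) (closedBall c R) := by
    intro z _ w _ hzw
    simpa [ht.ne'] using hzw
  refine le_trans (le_of_eq ?_) (lintegral_mono_set hsub)
  rw [lintegral_image_eq_lintegral_abs_det_fderiv_mul volume measurableSet_closedBall hderiv hinj]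
  have hdet : |(t • ContinuousLinearMap.id ℝ (Fin n → ℝ)).det| = t ^ n := by
    have : (t • ContinuousLinearMap.id ℝ (Fin n → ℝ)).det = t ^ n := by
      simp [ContinuousLinearMap.det]
    rw [this, abs_of_nonneg (by positivity)]
  rw [hdet, lintegral_const_mul' _ _ ENNReal.ofReal_ne_top]

/-- Hölder's inequality against the constant `1`. -/
theorem lintegral_le_rpow {n : ℕ} (q : ℝ) (hq : 1 < q) (B : Set (Fin n → ℝ))
    (g : (Fin n → ℝ) → ℝ≥0∞) (hg : Measurable g) :
    ∫⁻ z in B, g z ≤ (∫⁻ z in B, g z ^ q) ^ (1 / q) * volume B ^ (1 - 1 / q) := by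
  have hc := Real.HolderConjugate.conjExponent hq
  have := ENNReal.lintegral_mul_le_Lp_mul_Lq (volume.restrict B) hc hg.aemeasurable
    (aemeasurable_const (b := (1 : ℝ≥0∞)))
  have h2 : 1 / q.conjExponent = 1 - 1 / q := by
    have := hc.inv_add_inv_eq_one
    simp only [one_div]; linarith
  simpa [h2] using this

/-- Integrated form of the bound on `|F x - F z|` for `z` in a cube containing `x`. Since the mean of the gradient
over the cube contracted by `t` towards `x` costs a factor `t ^ (-n / q)`, the condition `n < q`
is what makes the integral over `t` converge. -/
theorem mean_diff_bound {n : ℕ} {F : (Fin n → ℝ) → ℝ} (hF : ContDiff ℝ 1 F) (q : ℝ)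
    (hq : 1 < q) (hnq : (n : ℝ) < q) (c : Fin n → ℝ) (R : ℝ) (x : Fin n → ℝ)
    (hx : x ∈ closedBall c R) :
    ∫⁻ z in closedBall c R, ENNReal.ofReal |F x - F z| ≤
      n * ENNReal.ofReal (2 * R) * ENNReal.ofReal (1 / (1 - n / q)) *
        ((∫⁻ z in closedBall c R, ENNReal.ofReal (gradNorm F z) ^ q) ^ (1 / q) *
          volume (closedBall c R) ^ (1 - 1 / q)) := by
  have hgc := gradNorm_continuous hF
  have hq0 : 0 < q := by linarith
  set B := closedBall c R with hB
  set G : (Fin n → ℝ) → ℝ≥0∞ := fun z => ENNReal.ofReal (gradNorm F z) with hG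
  have hGm : Measurable G := hgc.measurable.ennreal_ofReal
  set b : ℝ := 1 - n / q with hb
  have hb0 : 0 < b := by rw [hb, sub_pos, div_lt_one hq0]; exact hnq
  set W : ℝ≥0∞ := (∫⁻ z in B, G z ^ q) ^ (1 / q) * volume B ^ (1 - 1 / q) with hW
  have hslice : ∀ t ∈ Ioc (0 : ℝ) 1,
      ∫⁻ z in B, G (x + t • (z - x)) ≤ ENNReal.ofReal (t ^ (b - 1)) * W := by
    intro t ht
    have ht0 : 0 < t := ht.1
    refine (lintegral_le_rpow q hq B (fun z => G (x + t • (z - x)))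
      (hGm.comp (by fun_prop))).trans ?_
    rw [hW, ← mul_assoc]
    gcongr
    have h1 := lintegral_contract c R x hx t ht0 ht.2 (fun z => G z ^ q)
    have h2 : ∫⁻ z in B, G (x + t • (z - x)) ^ q
        ≤ ENNReal.ofReal ((t ^ n)⁻¹) * ∫⁻ z in B, G z ^ q := by
      refine le_trans (le_of_eq ?_) (mul_le_mul_right h1 _)
      rw [← mul_assoc, ← ENNReal.ofReal_mul (by positivity), inv_mul_cancel₀ (by positivity),
        ENNReal.ofReal_one, one_mul]
    refine (ENNReal.rpow_le_rpow h2 (by positivity)).trans (le_of_eq ?_)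
    rw [ENNReal.mul_rpow_of_nonneg _ _ (by positivity),
      ENNReal.ofReal_rpow_of_nonneg (by positivity) (by positivity)]
    congr 2
    rw [← Real.rpow_natCast, ← Real.rpow_neg ht0.le, ← Real.rpow_mul ht0.le]
    congr 1
    rw [hb]; ring
  have hm2 : Measurable (Function.uncurry fun (z : Fin n → ℝ) (t : ℝ) => G (x + t • (z - x))) :=
    hGm.comp (by fun_prop)
  calc ∫⁻ z in B, ENNReal.ofReal |F x - F z|
      ≤ ∫⁻ z in B, n * ENNReal.ofReal (2 * R) *
          ∫⁻ t in Ioc (0 : ℝ) 1, G (x + t • (z - x)) := by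
        refine setLIntegral_mono' measurableSet_closedBall fun z hz => ?_
        refine (segment_bound hF x z).trans ?_
        gcongr
        rw [← dist_eq_norm]
        have h1 := dist_triangle_right z x c
        have h2 := mem_closedBall.1 hz
        have h3 := mem_closedBall.1 hx
        linarith
    _ = n * ENNReal.ofReal (2 * R) *
          ∫⁻ t in Ioc (0 : ℝ) 1, ∫⁻ z in B, G (x + t • (z - x)) := by
        rw [lintegral_const_mul _ hm2.lintegral_prod_right,
          lintegral_lintegral_swap hm2.aemeasurable]
    _ ≤ n * ENNReal.ofReal (2 * R) *
          ∫⁻ t in Ioc (0 : ℝ) 1, ENNReal.ofReal (1 / b) * W *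
            ENNReal.ofReal (b * t ^ (b - 1)) := by
        refine mul_le_mul_right (setLIntegral_mono' measurableSet_Ioc fun t ht => ?_) _
        refine (hslice t ht).trans (le_of_eq ?_)
        rw [mul_right_comm, ← ENNReal.ofReal_mul (by positivity), ← mul_assoc (1 / b),
          one_div_mul_cancel hb0.ne', one_mul]
    _ = _ := by
        rw [lintegral_const_mul _ (by fun_prop), lintegral_rpow_Ioc 1 zero_le_one b hb0]
        simp [mul_assoc]

/-- Morrey's inequality on a cube, with the mean of the `q`-th power of the gradient, `q > n`. -/
theorem morrey {n : ℕ} {F : (Fin n → ℝ) → ℝ} (hF : ContDiff ℝ 1 F) (q : ℝ)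
    (hq : 1 < q) (hnq : (n : ℝ) < q) (c : Fin n → ℝ) (R : ℝ) (hR : 0 < R) (x y : Fin n → ℝ)
    (hx : x ∈ closedBall c R) (hy : y ∈ closedBall c R) :
    ENNReal.ofReal |F x - F y| ≤
      2 * n * ENNReal.ofReal (1 / (1 - n / q)) * ENNReal.ofReal (2 * R) *
        ((∫⁻ z in closedBall c R, ENNReal.ofReal (gradNorm F z) ^ q) /
          volume (closedBall c R)) ^ (1 / q) := by
  have hq0 : 0 < q := by linarith
  have hFc := hF.continuous
  have hv0 := volume_ball_ne_zero c hR
  have hvt := volume_ball_ne_top c R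
  have h1 := mean_diff_bound hF q hq hnq c R x hx
  have h2 := mean_diff_bound hF q hq hnq c R y hy
  set V := volume (closedBall c R) with hV
  set J := ∫⁻ z in closedBall c R, ENNReal.ofReal (gradNorm F z) ^ q
  have h3 : ENNReal.ofReal |F x - F y| * V ≤
      (∫⁻ z in closedBall c R, ENNReal.ofReal |F x - F z|) +
        ∫⁻ z in closedBall c R, ENNReal.ofReal |F y - F z| := by
    rw [← lintegral_add_left (by fun_prop), hV, ← setLIntegral_const]
    refine lintegral_mono fun z => ?_
    rw [← ENNReal.ofReal_add (abs_nonneg _) (abs_nonneg _)]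
    refine ENNReal.ofReal_le_ofReal ?_
    rw [abs_sub_comm (F y)]
    exact abs_sub_le _ _ _
  have h4 := (ENNReal.le_div_iff_mul_le (Or.inl hv0) (Or.inl hvt)).2 (h3.trans (add_le_add h1 h2))
  refine h4.trans (le_of_eq ?_)
  have h5 : V ^ (1 - 1 / q) = V * (V⁻¹) ^ (1 / q) := by
    rw [ENNReal.rpow_sub _ _ hv0 hvt, ENNReal.rpow_one, ENNReal.inv_rpow, div_eq_mul_inv]
  have h6 : V * V⁻¹ = 1 := ENNReal.mul_inv_cancel hv0 hvt
  set K := ENNReal.ofReal (1 / (1 - n / q))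
  rw [h5, div_eq_mul_inv J, ENNReal.mul_rpow_of_nonneg J _ (by positivity), div_eq_mul_inv]
  calc _ = 2 * n * K * ENNReal.ofReal (2 * R) * (J ^ (1 / q) * V⁻¹ ^ (1 / q)) * (V * V⁻¹) := by
        ring
    _ = _ := by rw [h6, mul_one]

theorem osc_nonneg {n : ℕ} (f : (Fin n → ℝ) → ℝ) (U : Set (Fin n → ℝ)) : 0 ≤ osc f U :=
  Real.sSup_nonneg (by rintro _ ⟨q, _, rfl⟩; exact abs_nonneg _)

/-! ### Oscillation sums -/

/-- Morrey's inequality for the dilated cube `γQ`, raised to the power `p`. -/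
theorem cube_bound {n : ℕ} {F : (Fin n → ℝ) → ℝ} (hF : ContDiff ℝ 1 F) (p q γ : ℝ)
    (hq : 1 < q) (hnq : (n : ℝ) < q) (hp : 0 < p) (hγ : 0 < γ) (Q : PCube n) (hQ : 0 < Q.r) :
    ENNReal.ofReal (Q.vol * (osc F (Q.scale γ).toSet / Q.diam) ^ p) ≤
      (2 * n * ENNReal.ofReal (1 / (1 - n / q)) * ENNReal.ofReal γ) ^ p *
        (volume Q.toSet * ((∫⁻ z in closedBall Q.c (γ * Q.r), ENNReal.ofReal (gradNorm F z) ^ q) /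
          volume (closedBall Q.c (γ * Q.r))) ^ (p / q)) := by
  have hq0 : 0 < q := by linarith
  have hd : 0 < Q.diam := by unfold PCube.diam; linarith
  have hR : 0 < γ * Q.r := mul_pos hγ hQ
  set K : ℝ≥0∞ := 2 * n * ENNReal.ofReal (1 / (1 - n / q)) with hK
  have hKt : K ≠ ∞ := by
    refine ENNReal.mul_ne_top (ENNReal.mul_ne_top (by simp) (by simp)) ENNReal.ofReal_ne_top
  set A : ℝ≥0∞ := (∫⁻ z in closedBall Q.c (γ * Q.r), ENNReal.ofReal (gradNorm F z) ^ q) /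
          volume (closedBall Q.c (γ * Q.r)) with hA
  have hAt : A ≠ ∞ := ENNReal.div_ne_top (lintegral_gradNorm_rpow_ne_top hF hq0.le _ _) (volume_ball_ne_zero _ hR)
  set D : ℝ≥0∞ := K * ENNReal.ofReal (2 * (γ * Q.r)) * A ^ (1 / q) with hD
  have hDt : D ≠ ∞ := ENNReal.mul_ne_top (ENNReal.mul_ne_top hKt ENNReal.ofReal_ne_top)
    (ENNReal.rpow_ne_top_of_nonneg (by positivity) hAt)
  have hosc : ENNReal.ofReal (osc F (Q.scale γ).toSet) ≤ D := by
    refine ENNReal.ofReal_le_of_le_toReal (Real.sSup_le ?_ ENNReal.toReal_nonneg)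
    rintro _ ⟨⟨x, y⟩, ⟨hx, hy⟩, rfl⟩
    exact (ENNReal.ofReal_le_iff_le_toReal hDt).1
      (morrey hF q hq hnq Q.c (γ * Q.r) hR x y hx hy)
  have hvol : ENNReal.ofReal Q.vol = volume Q.toSet := by
    rw [PCube.toSet, Real.volume_pi_closedBall _ hQ.le, Fintype.card_fin, PCube.vol]
  have hratio : ENNReal.ofReal (osc F (Q.scale γ).toSet / Q.diam)
      ≤ K * ENNReal.ofReal γ * A ^ (1 / q) := by
    rw [ENNReal.ofReal_div_of_pos hd]
    refine ENNReal.div_le_of_le_mul (hosc.trans (le_of_eq ?_))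
    have : 2 * (γ * Q.r) = γ * Q.diam := by unfold PCube.diam; ring
    rw [hD, this, ENNReal.ofReal_mul hγ.le]
    ring
  rw [ENNReal.ofReal_mul (by unfold PCube.vol; positivity), hvol,
    ← ENNReal.ofReal_rpow_of_nonneg (div_nonneg (osc_nonneg _ _) hd.le) hp.le]
  calc _ ≤ volume Q.toSet * (K * ENNReal.ofReal γ * A ^ (1 / q)) ^ p := by gcongr
    _ = _ := by
      rw [ENNReal.mul_rpow_of_nonneg _ _ hp.le, ← ENNReal.rpow_mul, one_div_mul_eq_div]
      ring

theorem osc_zero_dim (F : (Fin 0 → ℝ) → ℝ) (U : Set (Fin 0 → ℝ)) : osc F U = 0 := by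
  refine le_antisymm (Real.sSup_le ?_ le_rfl) (osc_nonneg _ _)
  rintro _ ⟨⟨x, y⟩, _, rfl⟩
  simp [Subsingleton.elim x y]

theorem statement4 (n : ℕ) (p : ℝ) (hp : (n : ℝ) < p) (γ : ℝ) (hγ : 1 ≤ γ) (M : ℕ) :
    ∃ C : ℝ, 0 < C ∧
      ∀ 𝒜 : Set (PCube n), 𝒜.Countable →
        (∀ Q ∈ 𝒜, 0 < Q.r) →
        (∀ x : Fin n → ℝ,
          {Q ∈ 𝒜 | x ∈ Q.toSet}.Finite ∧ {Q ∈ 𝒜 | x ∈ Q.toSet}.ncard ≤ M) →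
        ∀ F : (Fin n → ℝ) → ℝ, ContDiff ℝ 1 F →
          Integrable (fun x => gradNorm F x ^ p) volume →
          (∑' Q : 𝒜, ENNReal.ofReal
              ((Q : PCube n).vol *
                (osc F ((Q : PCube n).scale γ).toSet / (Q : PCube n).diam) ^ p))
            ≤ ENNReal.ofReal (C * ∫ x, gradNorm F x ^ p) := by
  rcases Nat.eq_zero_or_pos n with rfl | hn
  · refine ⟨1, one_pos, fun 𝒜 _ _ _ F _ _ => ?_⟩
    have hp0 : p ≠ 0 := by
      have : (0 : ℝ) < p := by simpa using hp
      exact this.ne'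
    simp [osc_zero_dim, Real.zero_rpow hp0]
  have hn1 : (1 : ℝ) ≤ n := by exact_mod_cast hn
  -- Any exponent strictly between `n` and `p` serves: Morrey needs `n < q`, and the maximal
  -- estimate is used at the exponent `p / q > 1`.
  obtain ⟨q, hnq, hqp⟩ := exists_between hp
  have hq : 1 < q := by linarith
  have hq0 : 0 < q := by linarith
  have hp0 : 0 < p := by linarith
  have hγ0 : 0 < γ := by linarith
  have hs : 1 < p / q := (one_lt_div hq0).2 hqp
  set K1 : ℝ≥0∞ := (2 * n * ENNReal.ofReal (1 / (1 - n / q)) * ENNReal.ofReal γ) ^ p with hK1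
  set K2 : ℝ≥0∞ := M * ENNReal.ofReal (5 ^ n) * 2 * ENNReal.ofReal (p / q / (p / q - 1)) *
    2 ^ (p / q - 1) with hK2
  have hK1t : K1 ≠ ∞ := ENNReal.rpow_ne_top_of_nonneg hp0.le (by finiteness)
  have hK2t : K2 ≠ ∞ := ENNReal.mul_ne_top (by finiteness)
    (ENNReal.rpow_ne_top_of_nonneg (by linarith) (by simp))
  have hKt : K1 * K2 ≠ ∞ := ENNReal.mul_ne_top hK1t hK2t
  refine ⟨(K1 * K2).toReal + 1, by positivity, fun 𝒜 _ hr hM F hF hint => ?_⟩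
  have hgc := gradNorm_continuous hF
  have hfinal : ENNReal.ofReal (∫ x, gradNorm F x ^ p)
      = ∫⁻ x, (ENNReal.ofReal (gradNorm F x) ^ q) ^ (p / q) := by
    rw [ofReal_integral_eq_lintegral_ofReal hint
      (ae_of_all _ fun x => Real.rpow_nonneg (gradNorm_nonneg F x) p)]
    refine lintegral_congr fun x => ?_
    rw [← ENNReal.rpow_mul, mul_div_cancel₀ _ hq0.ne',
      ENNReal.ofReal_rpow_of_nonneg (gradNorm_nonneg F x) hp0.le]
  rw [ENNReal.tsum_eq_iSup_sum]
  refine iSup_le fun S => ?_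
  set T : Finset (PCube n) := S.map (Function.Embedding.subtype _) with hT
  have hTA : ∀ Q ∈ T, Q ∈ 𝒜 := by
    intro Q hQ
    obtain ⟨a, _, rfl⟩ := Finset.mem_map.1 hQ
    exact a.2
  have hTM : ∀ x, {Q ∈ (T : Set (PCube n)) | x ∈ Q.toSet}.ncard ≤ M := fun x =>
    (Set.ncard_le_ncard (inter_subset_inter_left _ fun Q hQ => hTA Q hQ) (hM x).1).trans (hM x).2
  have hst := strong_type γ hγ M (p / q) hs T (fun Q hQ => hr Q (hTA Q hQ)) hTM
    (fun z => ENNReal.ofReal (gradNorm F z) ^ q)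
    (hgc.measurable.ennreal_ofReal.pow_const q)
    (fun x => ENNReal.rpow_ne_top_of_nonneg hq0.le ENNReal.ofReal_ne_top)
    (lintegral_gradNorm_rpow_ne_top hF hq0.le)
  calc _ = ∑ Q ∈ T, ENNReal.ofReal (Q.vol * (osc F (Q.scale γ).toSet / Q.diam) ^ p) := by
        rw [hT, Finset.sum_map]; rfl
    _ ≤ ∑ Q ∈ T, K1 * (volume Q.toSet * ((∫⁻ z in closedBall Q.c (γ * Q.r),
          ENNReal.ofReal (gradNorm F z) ^ q) / volume (closedBall Q.c (γ * Q.r))) ^ (p / q)) :=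
        Finset.sum_le_sum fun Q hQ =>
          cube_bound hF p q γ hq hnq hp0 hγ0 Q (hr Q (hTA Q hQ))
    _ ≤ K1 * (K2 * ENNReal.ofReal (∫ x, gradNorm F x ^ p)) := by
        rw [← Finset.mul_sum, hfinal]
        exact mul_le_mul_right hst _
    _ ≤ _ := by
        rw [ENNReal.ofReal_mul (by positivity), ← mul_assoc]
        refine mul_le_mul_left ?_ _
        rw [← ENNReal.ofReal_toReal hKt]
        exact ENNReal.ofReal_le_ofReal (by rw [ENNReal.ofReal_toReal hKt]; linarith)
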